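/- For a positive integer n, r₃(n) = 0 if and only if n is of the form 4^a(8k+7) for some nonnegative integers a, k (Legendre's three-square theorem). -/

import Mathlib

/-- Number of representations of `m` as a sum of three integer squares. -/
noncomputable def r3 (m : ℕ) : ℕ :=
  Nat.card {v : ℤ × ℤ × ℤ // v.1 ^ 2 + v.2.1 ^ 2 + v.2.2 ^ 2 = (m : ℤ)}

lemma exists_round (A g : ℤ) (hA : 0 < A) : ∃ t : ℤ, 4 * (g + t * A) ^ 2 ≤ A ^ 2 := by
  refine ⟨-((2 * g + A) / (2 * A)), ?_⟩
  have h1 := Int.emod_add_mul_ediv (2 * g + A) (2 * A)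
  have h2 := Int.emod_nonneg (2 * g + A) (b := 2 * A) (by omega)
  have h3 := Int.emod_lt_of_pos (2 * g + A) (b := 2 * A) (by omega)
  set k := (2 * g + A) / (2 * A)
  set r := (2 * g + A) % (2 * A)
  have h4 : 2 * (g + -k * A) = r - A := by linarith
  have : 4 * (g + -k * A) ^ 2 = (r - A) ^ 2 := by rw [← h4]; ring
  rw [this]; nlinarith

lemma ternary (N : ℕ) : ∀ a b c d e f : ℤ, 0 < a → 0 < a * b - f ^ 2 →
    a * b * c + 2 * d * e * f - a * d ^ 2 - b * e ^ 2 - c * f ^ 2 = 1 →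
    a + (a * b - f ^ 2) ≤ N → ∀ x y z : ℤ, ∃ u v w : ℤ,
    a * x ^ 2 + b * y ^ 2 + c * z ^ 2 + 2 * d * y * z + 2 * e * x * z + 2 * f * x * y
      = u ^ 2 + v ^ 2 + w ^ 2 := by
  induction N with
  | zero => intro a b c d e f ha hA _ h; push_cast at h; omega
  | succ N ih =>
    intro a b c d e f ha hA hD hN x y z
    push_cast at hN
    by_cases h1 : 4 * (a * b - f ^ 2) < 3 * a ^ 2
    · obtain ⟨t, ht⟩ := exists_round a f ha
      have key : a * (a * t ^ 2 + 2 * f * t + b) = (a * b - f ^ 2) + (f + t * a) ^ 2 := by ring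
      have hpos : 0 < a * t ^ 2 + 2 * f * t + b := by
        by_contra hh
        push Not at hh
        nlinarith [sq_nonneg (f + t * a)]
      have hlt : a * t ^ 2 + 2 * f * t + b < a := by
        by_contra hh
        push Not at hh
        nlinarith
      have e1 : (a * t ^ 2 + 2 * f * t + b) * a - (f + t * a) ^ 2 = a * b - f ^ 2 := by ring
      obtain ⟨u, v, w, h⟩ := ih (a * t ^ 2 + 2 * f * t + b) a c e (d + e * t) (f + t * a) hpos
        (by rw [e1]; exact hA) (by rw [← hD]; ring) (by rw [e1]; linarith) y (x - t * y) z
      exact ⟨u, v, w, by rw [← h]; ring⟩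
    by_cases h2 : 4 * a < 3 * (a * b - f ^ 2) ^ 2
    · obtain ⟨t, ht⟩ := exists_round (a * b - f ^ 2) (a * d - e * f) hA
      have key : (a * b - f ^ 2) * (a * (c + 2 * t * d + t ^ 2 * b) - (e + t * f) ^ 2) =
          a + ((a * d - e * f) + t * (a * b - f ^ 2)) ^ 2 := by
        linear_combination a * hD
      set A := a * b - f ^ 2 with hAdef
      set A' := a * (c + 2 * t * d + t ^ 2 * b) - (e + t * f) ^ 2 with hA'
      have hpos : 0 < A' := by
        by_contra hh
        push Not at hh
        nlinarith [sq_nonneg ((a * d - e * f) + t * A)]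
      have hlt : A' < A := by
        by_contra hh
        push Not at hh
        nlinarith
      obtain ⟨u, v, w, h⟩ := ih a (c + 2 * t * d + t ^ 2 * b) b (d + t * b) f (e + t * f) ha
        hpos (by rw [← hD]; ring) (by linarith) x z (y - t * z)
      exact ⟨u, v, w, by rw [← h]; ring⟩
    push Not at h1 h2
    have hA1 : a = 1 ∧ a * b - f ^ 2 = 1 := by
      generalize a * b - f ^ 2 = A at *
      have ha2 : A ≤ 1 ∨ a ≤ 1 := by
        by_contra hh
        push Not at hh
        obtain ⟨h3, h4⟩ := hh
        rcases le_total a A with h5 | h5 <;> nlinarith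
      rcases ha2 with h3 | h3
      · have : A = 1 := by omega
        subst this
        exact ⟨by nlinarith, rfl⟩
      · have : a = 1 := by omega
        subst this
        exact ⟨rfl, by nlinarith⟩
    obtain ⟨rfl, hA1⟩ := hA1
    have hb : b = 1 + f ^ 2 := by linarith
    subst hb
    have hc : c = 1 + e ^ 2 + (d - e * f) ^ 2 := by linarith
    subst hc
    exact ⟨x + f * y + e * z, y + (d - e * f) * z, z, by ring⟩

lemma rep_of_sq (n b q s : ℤ) (hb : 0 < b) (hq : 0 < q) (h : q = b * n - 1) (hs : q ∣ s ^ 2 + b) :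
    ∃ u v w : ℤ, n = u ^ 2 + v ^ 2 + w ^ 2 := by
  obtain ⟨a, ha⟩ := hs
  have hapos : 0 < a := by
    by_contra hh
    push Not at hh
    nlinarith [sq_nonneg s]
  have e1 : a * q - s ^ 2 = b := by linarith
  obtain ⟨u, v, w, hh⟩ := ternary (a + b).toNat a q n 0 1 s hapos (by rw [e1]; exact hb)
    (by linear_combination n * e1 - h) (by rw [e1]; omega) 0 0 1
  exact ⟨u, v, w, by rw [← hh]; ring⟩

lemma exists_sq (p : ℕ) (b : ℤ) (hp : p.Prime) (h : jacobiSym (-b) p = 1) :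
    ∃ s : ℤ, (p : ℤ) ∣ s ^ 2 + b := by
  have := Fact.mk hp
  obtain ⟨r, hr⟩ := ZMod.isSquare_of_jacobiSym_eq_one h
  obtain ⟨s, rfl⟩ := ZMod.intCast_surjective r
  refine ⟨s, ?_⟩
  rw [← ZMod.intCast_zmod_eq_zero_iff_dvd]
  push_cast at hr ⊢
  rw [pow_two, ← hr]; ring

lemma case_even (n : ℕ) (hn : n % 4 = 2) : ∃ u v w : ℤ, (n : ℤ) = u ^ 2 + v ^ 2 + w ^ 2 := by
  have hcop : (n - 1).Coprime (4 * n) := by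
    apply Nat.Coprime.mul_right
    · rw [show 4 = 2 ^ 2 by norm_num]
      apply Nat.Coprime.pow_right
      rw [Nat.coprime_two_right, Nat.odd_iff]; omega
    · have := Nat.coprime_self_add_right (m := n - 1) (n := 1)
      rw [show n - 1 + 1 = n by omega] at this
      exact this.2 (Nat.coprime_one_right _)
  obtain ⟨p, hgt, hp, hmod⟩ := Nat.forall_exists_prime_gt_and_modEq n (by omega) hcop
  obtain ⟨m, hm⟩ := (Nat.modEq_iff_dvd' (by omega)).1 hmod.symm
  have hpm : p + 1 = n * (4 * m + 1) := by
    have : p = 4 * n * m + (n - 1) := by omega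
    have h2 : n * (4 * m + 1) = 4 * n * m + n := by ring
    omega
  have hpz : (p : ℤ) = (4 * m + 1 : ℕ) * n - 1 := by
    have : (p : ℤ) + 1 = n * (4 * m + 1 : ℕ) := by exact_mod_cast hpm
    linarith
  have hp4 : p % 4 = 1 := by
    have : p = 4 * (n * m) + (n - 1) := by rw [← mul_assoc]; omega
    omega
  have hJ : jacobiSym (-((4 * m + 1 : ℕ) : ℤ)) p = 1 := by
    have hodd : Odd (4 * m + 1) := by rw [Nat.odd_iff]; omega
    rw [jacobiSym.neg _ (Nat.odd_iff.2 (by omega)), ZMod.χ₄_nat_one_mod_four hp4, one_mul,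
      jacobiSym.quadratic_reciprocity_one_mod_four' hodd hp4, hpz]
    rw [jacobiSym.mod_left' (a₂ := -1), jacobiSym.at_neg_one hodd, ZMod.χ₄_nat_one_mod_four (by omega)]
    exact Int.ModEq.symm ((Int.modEq_iff_dvd).2 ⟨n, by ring⟩)
  obtain ⟨s, hs⟩ := exists_sq p _ hp hJ
  exact rep_of_sq n _ p s (by positivity) (by exact_mod_cast hp.pos) hpz hs

lemma case_odd (n c : ℕ) (h : (n % 8 = 3 ∧ c = 1) ∨ ((n % 8 = 1 ∨ n % 8 = 5) ∧ c = 3)) :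
    ∃ u v w : ℤ, (n : ℤ) = u ^ 2 + v ^ 2 + w ^ 2 := by
  obtain ⟨k, hk⟩ : ∃ k, c * n = 2 * k + 1 := by
    rcases h with ⟨h, rfl⟩ | ⟨h, rfl⟩
    · exact ⟨n / 2, by omega⟩
    · exact ⟨(3 * n) / 2, by omega⟩
  have hkodd : k % 2 = 1 := by
    rcases h with ⟨h, rfl⟩ | ⟨h, rfl⟩ <;> omega
  have hcop : k.Coprime (4 * n) := by
    apply Nat.Coprime.mul_right
    · rw [show 4 = 2 ^ 2 by norm_num]
      apply Nat.Coprime.pow_right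
      rw [Nat.coprime_two_right, Nat.odd_iff]; omega
    · have : k.Coprime (c * n) := by
        rw [hk]; simp
      exact this.coprime_mul_left_right
  obtain ⟨p, hgt, hp, hmod⟩ := Nat.forall_exists_prime_gt_and_modEq (n + k) (by omega) hcop
  obtain ⟨m, hm⟩ := (Nat.modEq_iff_dvd' (by omega)).1 hmod.symm
  have hpm : p = 4 * (n * m) + k := by rw [← mul_assoc]; omega
  have hpz : 2 * (p : ℤ) = (8 * m + c : ℕ) * n - 1 := by
    have : (c : ℤ) * n = 2 * k + 1 := by exact_mod_cast hk
    rw [hpm]; push_cast; linear_combination -this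
  have hpodd : p % 2 = 1 := by omega
  have hb8 : (8 * m + c) % 8 = 1 ∨ (8 * m + c) % 8 = 3 := by omega
  have hodd : Odd (8 * m + c) := by rw [Nat.odd_iff]; omega
  have hpb : p % 4 = 1 ∨ (p % 4 = 3 ∧ (8 * m + c) % 4 = 3) := by
    rcases h with ⟨h, rfl⟩ | ⟨h, rfl⟩ <;> omega
  have hrec : jacobiSym (-((8 * m + c : ℕ) : ℤ)) p = jacobiSym p (8 * m + c) := by
    rw [jacobiSym.neg _ (Nat.odd_iff.2 hpodd)]
    rcases hpb with h4 | ⟨h4, h5⟩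
    · rw [ZMod.χ₄_nat_one_mod_four h4, one_mul,
        jacobiSym.quadratic_reciprocity_one_mod_four' hodd h4]
    · rw [ZMod.χ₄_nat_three_mod_four h4,
        jacobiSym.quadratic_reciprocity_three_mod_four h5 h4]
      ring
  have h2 : jacobiSym (-2) (8 * m + c) = 1 := by
    rw [jacobiSym.at_neg_two hodd, ZMod.χ₈'_nat_eq_if_mod_eight]
    rw [if_neg (by omega), if_pos hb8]
  have hJ : jacobiSym (-((8 * m + c : ℕ) : ℤ)) p = 1 := by
    have h3 : jacobiSym (-2 * p) (8 * m + c) = jacobiSym 1 (8 * m + c) :=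
      jacobiSym.mod_left'
        (Int.ModEq.symm ((Int.modEq_iff_dvd).2 ⟨-n, by linear_combination -hpz⟩))
    rw [jacobiSym.mul_left, h2, one_mul, jacobiSym.one_left] at h3
    rw [hrec, h3]
  obtain ⟨s, hs⟩ := exists_sq p _ hp hJ
  obtain ⟨s, hs, hs2⟩ : ∃ s : ℤ, (p : ℤ) ∣ s ^ 2 + (8 * m + c : ℕ) ∧ s % 2 = 1 := by
    rcases Int.emod_two_eq_zero_or_one s with h0 | h0
    · refine ⟨s + p, ?_, by omega⟩
      rw [show (s + p) ^ 2 + ((8 * m + c : ℕ) : ℤ) = (s ^ 2 + (8 * m + c : ℕ)) + p * (2 * s + p) by ring]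
      exact dvd_add hs (dvd_mul_right _ _)
    · exact ⟨s, hs, h0⟩
  have hd2 : (2 : ℤ) ∣ s ^ 2 + (8 * m + c : ℕ) := by
    have h1 : Odd (s ^ 2) := (Int.odd_iff.2 hs2).pow
    have h2 : Odd ((8 * m + c : ℕ) : ℤ) := by exact_mod_cast hodd
    exact (h1.add_odd h2).two_dvd
  have hco : IsCoprime (2 : ℤ) p := by
    have : Nat.Coprime 2 p := by rw [Nat.coprime_two_left, Nat.odd_iff]; exact hpodd
    exact_mod_cast Nat.isCoprime_iff_coprime.2 this
  have := hp.pos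
  exact rep_of_sq n _ (2 * p) s (by omega) (by omega) hpz (hco.mul_dvd hd2 hs)

lemma rep (n : ℕ) (hn : 1 ≤ n) (h : ¬ ∃ a k : ℕ, n = 4 ^ a * (8 * k + 7)) :
    ∃ u v w : ℤ, (n : ℤ) = u ^ 2 + v ^ 2 + w ^ 2 := by
  induction n using Nat.strong_induction_on with
  | _ n ih =>
    by_cases h4 : n % 4 = 0
    · obtain ⟨m, rfl⟩ := Nat.dvd_of_mod_eq_zero h4
      obtain ⟨u, v, w, hh⟩ := ih m (by omega) (by omega) (by
        rintro ⟨a, k, rfl⟩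
        exact h ⟨a + 1, k, by ring⟩)
      exact ⟨2 * u, 2 * v, 2 * w, by push_cast; rw [hh]; ring⟩
    have h7 : n % 8 ≠ 7 := fun h7 => h ⟨0, n / 8, by omega⟩
    by_cases h2 : n % 4 = 2
    · exact case_even n h2
    by_cases h3 : n % 8 = 3
    · exact case_odd n 1 (Or.inl ⟨h3, rfl⟩)
    · exact case_odd n 3 (Or.inr ⟨by omega, rfl⟩)

lemma not_rep (a k : ℕ) : ∀ x y z : ℤ, x ^ 2 + y ^ 2 + z ^ 2 ≠ 4 ^ a * (8 * k + 7) := by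
  have sq8 : ∀ x : ℤ, (x % 2 = 1 ∧ x ^ 2 % 8 = 1) ∨ (x % 2 = 0 ∧ (x ^ 2 % 8 = 0 ∨ x ^ 2 % 8 = 4)) := by
    intro x
    have : x % 8 = 0 ∨ x % 8 = 1 ∨ x % 8 = 2 ∨ x % 8 = 3 ∨ x % 8 = 4 ∨ x % 8 = 5 ∨ x % 8 = 6 ∨
      x % 8 = 7 := by omega
    rcases this with h | h | h | h | h | h | h | h <;> simp [pow_two, Int.mul_emod, h] <;> omega
  induction a with
  | zero =>
    intro x y z h
    rcases sq8 x with h1 | h1 <;> rcases sq8 y with h2 | h2 <;> rcases sq8 z with h3 | h3 <;> omega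
  | succ a ih =>
    intro x y z h
    have hM : x ^ 2 + y ^ 2 + z ^ 2 = 4 * (4 ^ a * (8 * k + 7)) := by rw [h]; ring
    generalize hMM : (4 ^ a * (8 * k + 7) : ℤ) = M at *
    have : x % 2 = 0 ∧ y % 2 = 0 ∧ z % 2 = 0 := by
      rcases sq8 x with h1 | h1 <;> rcases sq8 y with h2 | h2 <;> rcases sq8 z with h3 | h3 <;> omega
    obtain ⟨h1, h2, h3⟩ := this
    obtain ⟨x, rfl⟩ := Int.dvd_of_emod_eq_zero h1
    obtain ⟨y, rfl⟩ := Int.dvd_of_emod_eq_zero h2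
    obtain ⟨z, rfl⟩ := Int.dvd_of_emod_eq_zero h3
    exact ih x y z (by linarith)

lemma fin_rep (m : ℕ) :
    Finite {v : ℤ × ℤ × ℤ // v.1 ^ 2 + v.2.1 ^ 2 + v.2.2 ^ 2 = (m : ℤ)} := by
  apply Set.Finite.to_subtype
    (s := {v : ℤ × ℤ × ℤ | v.1 ^ 2 + v.2.1 ^ 2 + v.2.2 ^ 2 = (m : ℤ)})
  apply Set.Finite.subset (Set.finite_Icc ((-m, -m, -m) : ℤ × ℤ × ℤ) (m, m, m))
  rintro ⟨x, y, z⟩ h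
  simp only [Set.mem_ofPred_eq] at h
  have key : ∀ t : ℤ, t ^ 2 ≤ m → -(m : ℤ) ≤ t ∧ t ≤ m := by
    intro t ht
    have h1 : |t| ≤ t ^ 2 := by
      rw [← sq_abs]; exact Int.le_self_sq _
    exact abs_le.1 (h1.trans ht)
  have hx := key x (by nlinarith [sq_nonneg y, sq_nonneg z])
  have hy := key y (by nlinarith [sq_nonneg x, sq_nonneg z])
  have hz := key z (by nlinarith [sq_nonneg y, sq_nonneg x])
  exact ⟨⟨hx.1, hy.1, hz.1⟩, ⟨hx.2, hy.2, hz.2⟩⟩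

/-- Legendre's three-square theorem: for n ≥ 1,
r₃(n) = 0 iff n = 4^a(8k+7) for some nonnegative integers a, k. -/
theorem legendre_three_squares (n : ℕ) (hn : 1 ≤ n) :
    r3 n = 0 ↔ ∃ a k : ℕ, n = 4 ^ a * (8 * k + 7) := by
  have := fin_rep n
  constructor
  · intro h
    by_contra hc
    obtain ⟨u, v, w, hh⟩ := rep n hn hc
    rw [r3, Finite.card_eq_zero_iff] at h
    exact h.false ⟨(u, v, w), hh.symm⟩
  · rintro ⟨a, k, hk⟩
    rw [r3, Finite.card_eq_zero_iff]
    refine ⟨?_⟩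
    rintro ⟨⟨x, y, z⟩, h⟩
    refine not_rep a k x y z ?_
    simp only at h
    rw [h, hk]; push_cast; ring
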